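/- arXiv:2501.15291 — 6 statements merged into one kernel-verified Lean document; each statement's English description precedes it below -/
import Mathlib

section
/- For every n ∈ ℕ and every y ∈ ℝ, ∫_ℝ e^{ixy} H_n(x) e^{−x²/2} dx = √(2π) · iⁿ · e^{−y²/2} · H_n(y). -/
open MeasureTheory Polynomial

/-- The physicists' Hermite polynomials: `H 0 = 1`, `H (n+1) = 2x·H n − (H n)'`. -/
noncomputable def hermiteH : ℕ → Polynomial ℝ
  | 0 => 1
  | n + 1 => 2 * X * hermiteH n - derivative (hermiteH n)

/-!
Writing `h n` for the Hermite function `x ↦ H n x * exp (-x ^ 2 / 2)`, the recursion for `H`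
says that the raising operator `f ↦ x f - f'` sends `h n` to `h (n + 1)`. The Fourier transform
with kernel `exp (i x y)` exchanges multiplication by `x` and differentiation, so it commutes with
the raising operator up to a factor `i`. Since the Gaussian `h 0` is an eigenfunction with
eigenvalue `√(2π)`, each `h n` is one with eigenvalue `√(2π) iⁿ`.
-/

open scoped Real FourierTransform

section AngularFourier

variable {E : Type*} [NormedAddCommGroup E] [NormedSpace ℂ E]

/-- The Fourier transform on `ℝ` with unnormalised kernel `exp (i x y)`: the frequency `y` is
angular and the exponent has a positive sign, unlike in Mathlib's `𝓕`. -/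
noncomputable def angularFourier (f : ℝ → E) (y : ℝ) : E :=
  ∫ x : ℝ, Complex.exp (Complex.I * x * y) • f x

theorem angularFourier_eq_fourier (f : ℝ → E) (y : ℝ) :
    angularFourier f y = 𝓕 f (-y / (2 * π)) := by
  rw [Real.fourier_real_eq_integral_exp_smul]
  refine integral_congr_ae (.of_forall fun x ↦ ?_)
  have phase_eq : -2 * π * x * (-y / (2 * π)) = x * y := by field_simp
  simp only [phase_eq, Complex.ofReal_mul]
  congr 2
  ring

theorem hasDerivAt_angularFourier {f : ℝ → E} (hf : Integrable f)
    (hxf : Integrable fun x ↦ x • f x) (y : ℝ) :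
    HasDerivAt (angularFourier f) (Complex.I • angularFourier (fun x ↦ x • f x) y) y := by
  have hscale : HasDerivAt (fun y : ℝ ↦ -y / (2 * π)) (-1 / (2 * π)) y :=
    (hasDerivAt_id y).neg.div_const _
  have hcomp := (Real.hasDerivAt_fourier hf hxf (-y / (2 * π))).scomp y hscale
  rw [funext (angularFourier_eq_fourier f)]
  convert! hcomp using 1
  rw [← angularFourier_eq_fourier, angularFourier, angularFourier, ← integral_smul,
    ← integral_smul]
  refine integral_congr_ae (.of_forall fun x ↦ ?_)
  simp only [← Complex.coe_smul, smul_smul]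
  congr 1
  push_cast
  field_simp

theorem angularFourier_deriv {f : ℝ → E} (hf : Integrable f) (hdiff : Differentiable ℝ f)
    (hf' : Integrable (deriv f)) (y : ℝ) :
    angularFourier (deriv f) y = -(Complex.I * y) • angularFourier f y := by
  rw [angularFourier_eq_fourier, angularFourier_eq_fourier, Real.fourier_deriv hf hdiff hf']
  push_cast
  field_simp

theorem angularFourier_sub {f g : ℝ → E} (hf : Integrable f) (hg : Integrable g) (y : ℝ) :
    angularFourier (fun x ↦ f x - g x) y = angularFourier f y - angularFourier g y := by
  have hkernel {u : ℝ → E} (hu : Integrable u) :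
      Integrable fun x : ℝ ↦ Complex.exp (Complex.I * x * y) • u x := by
    refine hu.bdd_smul 1 (by fun_prop) (.of_forall fun x ↦ ?_)
    simp [Complex.norm_exp]
  simp only [angularFourier, smul_sub, integral_sub (hkernel hf) (hkernel hg)]

theorem angularFourier_smul_sub_deriv {f : ℝ → E} (hf : Integrable f)
    (hxf : Integrable fun x ↦ x • f x) (hdiff : Differentiable ℝ f)
    (hf' : Integrable (deriv f)) (y : ℝ) :
    angularFourier (fun x ↦ x • f x - deriv f x) y =
      Complex.I • (y • angularFourier f y - deriv (angularFourier f) y) := by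
  rw [angularFourier_sub hxf hf', angularFourier_deriv hf hdiff hf',
    (hasDerivAt_angularFourier hf hxf y).deriv, smul_sub, smul_smul Complex.I Complex.I,
    Complex.I_mul_I, ← Complex.coe_smul y, smul_smul]
  module

end AngularFourier

theorem angularFourier_gaussian (y : ℝ) :
    angularFourier (fun x ↦ (Real.exp (-x ^ 2 / 2) : ℂ)) y =
      (√(2 * π) : ℂ) * (Real.exp (-y ^ 2 / 2) : ℂ) := by
  have sqrt_eq : (√(2 * π) : ℂ) = (π / (1 / 2 : ℂ)) ^ (1 / 2 : ℂ) := by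
    rw [Real.sqrt_eq_rpow, Complex.ofReal_cpow (by positivity)]
    push_cast
    congr 1
    ring
  have gaussian_eq : (Real.exp (-y ^ 2 / 2) : ℂ) =
      Complex.exp (-(y : ℂ) ^ 2 / (4 * (1 / 2))) := by
    push_cast
    congr 1
    ring
  rw [sqrt_eq, gaussian_eq, ← fourierIntegral_gaussian (by norm_num), angularFourier]
  refine integral_congr_ae (.of_forall fun x ↦ ?_)
  simp only [smul_eq_mul]
  push_cast
  congr 2 <;> ring

theorem integrable_eval_mul_exp_neg_mul_sq (p : ℝ[X]) {b : ℝ} (hb : 0 < b) :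
    Integrable fun x ↦ p.eval x * Real.exp (-b * x ^ 2) := by
  induction p using Polynomial.induction_on' with
  | add p q hp hq => simpa only [eval_add, add_mul] using! hp.add hq
  | monomial n a =>
    have hn : (-1 : ℝ) < n := by linarith [n.cast_nonneg (α := ℝ)]
    simpa only [eval_monomial, Real.rpow_natCast, mul_assoc] using
      (integrable_rpow_mul_exp_neg_mul_sq hb hn).const_mul a

/-- The unnormalised Hermite function `H n x * exp (-x ^ 2 / 2)`, taken complex-valued so that
its Fourier transform is a function of the same type. -/
noncomputable def hermiteFunction (n : ℕ) (x : ℝ) : ℂ :=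
  ((hermiteH n).eval x * Real.exp (-x ^ 2 / 2) : ℝ)

theorem hermiteFunction_zero : hermiteFunction 0 = fun x ↦ (Real.exp (-x ^ 2 / 2) : ℂ) := by
  simp [funext_iff, hermiteFunction, hermiteH]

theorem hasDerivAt_hermiteFunction (n : ℕ) (x : ℝ) :
    HasDerivAt (hermiteFunction n) (x • hermiteFunction n x - hermiteFunction (n + 1) x) x := by
  have hexponent : HasDerivAt (fun x : ℝ ↦ -x ^ 2 / 2) (-x) x := by
    convert! (hasDerivAt_pow 2 x).neg.div_const 2 using 1
    norm_num
    ring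
  convert! (((hermiteH n).hasDerivAt x).mul hexponent.exp).ofReal_comp using 1
  simp only [hermiteFunction, hermiteH, eval_sub, eval_mul, eval_ofNat, eval_X, Complex.real_smul]
  push_cast
  ring

theorem hermiteFunction_succ (n : ℕ) :
    hermiteFunction (n + 1) = fun x ↦ x • hermiteFunction n x - deriv (hermiteFunction n) x := by
  ext x
  rw [(hasDerivAt_hermiteFunction n x).deriv, sub_sub_cancel]

theorem integrable_eval_smul_hermiteFunction (p : ℝ[X]) (n : ℕ) :
    Integrable fun x ↦ p.eval x • hermiteFunction n x := by
  convert! (integrable_eval_mul_exp_neg_mul_sq (p * hermiteH n) one_half_pos).ofReal (𝕜 := ℂ)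
    using 2 with x
  have exponent_eq : -(1 / 2) * x ^ 2 = -x ^ 2 / 2 := by ring
  simp only [hermiteFunction, exponent_eq, eval_mul, mul_assoc, Complex.real_smul,
    Complex.ofReal_mul, Complex.coe_algebraMap]

theorem integrable_hermiteFunction (n : ℕ) : Integrable (hermiteFunction n) := by
  simpa only [eval_one, one_smul] using integrable_eval_smul_hermiteFunction 1 n

theorem integrable_smul_hermiteFunction (n : ℕ) :
    Integrable fun x ↦ x • hermiteFunction n x := by
  simpa only [eval_X] using integrable_eval_smul_hermiteFunction X n

theorem integrable_deriv_hermiteFunction (n : ℕ) : Integrable (deriv (hermiteFunction n)) := by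
  rw [funext fun x ↦ (hasDerivAt_hermiteFunction n x).deriv]
  exact (integrable_smul_hermiteFunction n).sub (integrable_hermiteFunction (n + 1))

theorem angularFourier_hermiteFunction_succ (n : ℕ) (y : ℝ) :
    angularFourier (hermiteFunction (n + 1)) y =
      Complex.I • (y • angularFourier (hermiteFunction n) y
        - deriv (angularFourier (hermiteFunction n)) y) := by
  rw [hermiteFunction_succ]
  exact angularFourier_smul_sub_deriv (integrable_hermiteFunction n)
    (integrable_smul_hermiteFunction n)
    (fun x ↦ (hasDerivAt_hermiteFunction n x).differentiableAt)
    (integrable_deriv_hermiteFunction n) y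

theorem angularFourier_hermiteFunction (n : ℕ) :
    angularFourier (hermiteFunction n) = (√(2 * π) * Complex.I ^ n : ℂ) • hermiteFunction n := by
  induction n with
  | zero =>
    ext y
    simp only [hermiteFunction_zero, angularFourier_gaussian, pow_zero, mul_one, Pi.smul_apply,
      smul_eq_mul]
  | succ n ih =>
    ext y
    rw [angularFourier_hermiteFunction_succ, ih, deriv_const_smul_field, hermiteFunction_succ]
    simp only [Pi.smul_apply, smul_eq_mul, Complex.real_smul]
    ring

/-- `∫ e^{ixy} H_n(x) e^{-x²/2} dx = √(2π) iⁿ e^{-y²/2} H_n(y)`. -/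
theorem hermite_fourier_integral (n : ℕ) (y : ℝ) :
    ∫ x : ℝ, Complex.exp (Complex.I * x * y)
        * (((hermiteH n).eval x : ℝ) : ℂ) * ((Real.exp (-x ^ 2 / 2) : ℝ) : ℂ)
      = ((Real.sqrt (2 * Real.pi) : ℝ) : ℂ) * Complex.I ^ n
          * ((Real.exp (-y ^ 2 / 2) : ℝ) : ℂ) * (((hermiteH n).eval y : ℝ) : ℂ) := by
  have heigen := congrFun (angularFourier_hermiteFunction n) y
  simp only [angularFourier, hermiteFunction, Pi.smul_apply, smul_eq_mul, Complex.ofReal_mul,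
    ← mul_assoc] at heigen
  rw [heigen, mul_right_comm]
end

section
/- For all x, y ∈ ℝ and all real z with |z| < 1/2, the series ∑_{n=0}^∞ (zⁿ/n!)·H_n(x)·H_n(y) converges and its sum equals (1 − 4z²)^{−1/2} · exp( y² − (y − 2zx)²/(1 − 4z²) ) (Mehler's formula). -/
open Polynomial Filter Topology

/-!
For a centred Gaussian `T` of variance `1 / 2`, Stein's lemma shows that `E[(2 * (x + i * T)) ^ n]`
satisfies the three-term recurrence of the Hermite polynomials, hence equals `Hₙ(x)`. With `S` an
independent copy of `T`, the series is therefore `E[exp (4 * z * (x + i * S) * (y + i * T))]`, where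
`2 * |a * b| ≤ |a| ^ 2 + |b| ^ 2` gives an integrable majorant for every `‖z‖ < 1 / 2`.
Integrating out `T` and then `S` uses only the integral of the exponential of a quadratic
polynomial.
-/

open MeasureTheory ProbabilityTheory Complex
open scoped NNReal

lemma derivative_hermiteH (n : ℕ) :
    derivative (hermiteH n) = 2 * (n : ℝ[X]) * hermiteH (n - 1) := by
  induction n with
  | zero => simp [hermiteH]
  | succ n ih =>
    have hsucc : (n : ℝ[X]) * hermiteH n
        = (n : ℝ[X]) * (2 * X * hermiteH (n - 1) - derivative (hermiteH (n - 1))) := by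
      cases n <;> simp [hermiteH]
    simp only [hermiteH, derivative_sub, derivative_mul, derivative_X, derivative_ofNat,
      derivative_natCast, ih, Nat.cast_add, Nat.cast_one, Nat.add_sub_cancel]
    linear_combination -2 * hsucc

lemma hermiteH_succ_eq_sub (n : ℕ) :
    hermiteH (n + 1) = 2 * X * hermiteH n - 2 * (n : ℝ[X]) * hermiteH (n - 1) := by
  rw [hermiteH, derivative_hermiteH]

section Gaussian

variable {μ : ℝ} {v : ℝ≥0}

lemma integrable_gaussianReal_iff {E : Type*} [NormedAddCommGroup E] [NormedSpace ℝ E]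
    (hv : v ≠ 0) {f : ℝ → E} :
    Integrable f (gaussianReal μ v) ↔ Integrable fun t ↦ gaussianPDFReal μ v t • f t := by
  rw [gaussianReal_of_var_ne_zero μ hv, integrable_withDensity_iff_integrable_smul'
    (measurable_gaussianPDF μ v) (ae_of_all _ fun _ ↦ gaussianPDF_lt_top)]
  simp only [toReal_gaussianPDF]

lemma hasDerivAt_gaussianPDFReal (hv : v ≠ 0) (t : ℝ) :
    HasDerivAt (gaussianPDFReal μ v) (-((t - μ) / v) * gaussianPDFReal μ v t) t := by
  have hexponent : HasDerivAt (fun t : ℝ ↦ -(t - μ) ^ 2 / (2 * v)) (-((t - μ) / v)) t := by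
    have hsq := ((((hasDerivAt_id t).sub_const μ).pow 2).neg).div_const (2 * (v : ℝ))
    refine hsq.congr_deriv ?_
    simp only [id, Nat.cast_ofNat, Nat.add_one_sub_one, pow_one, mul_one]
    field
  refine (hexponent.exp.const_mul (√(2 * Real.pi * v))⁻¹).congr_deriv ?_
  rw [gaussianPDFReal]
  ring

/-- **Stein's lemma**. -/
lemma integral_sub_smul_gaussianReal {E : Type*} [NormedAddCommGroup E] [NormedSpace ℝ E]
    {f f' : ℝ → E} (hf : ∀ t, HasDerivAt f (f' t) t)
    (hf_int : Integrable f (gaussianReal μ v)) (hf'_int : Integrable f' (gaussianReal μ v))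
    (hmul_int : Integrable (fun t ↦ (t - μ) • f t) (gaussianReal μ v)) :
    ∫ t, (t - μ) • f t ∂gaussianReal μ v = (v : ℝ) • ∫ t, f' t ∂gaussianReal μ v := by
  obtain rfl | hv := eq_or_ne v 0
  · by_cases hE : CompleteSpace E <;> simp [integral, hE]
  have hderiv (t : ℝ) : HasDerivAt (fun t ↦ gaussianPDFReal μ v t • f t)
      (gaussianPDFReal μ v t • (f' t - (v : ℝ)⁻¹ • (t - μ) • f t)) t := by
    refine ((hasDerivAt_gaussianPDFReal hv t).smul (hf t)).congr_deriv ?_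
    module
  have hscaled_int : Integrable (fun t ↦ (v : ℝ)⁻¹ • (t - μ) • f t) (gaussianReal μ v) :=
    hmul_int.smul (v : ℝ)⁻¹
  have hzero : ∫ t, (f' t - (v : ℝ)⁻¹ • (t - μ) • f t) ∂gaussianReal μ v = 0 := by
    rw [integral_gaussianReal_eq_integral_smul hv]
    exact integral_eq_zero_of_hasDerivAt_of_integrable hderiv
      ((integrable_gaussianReal_iff hv).mp (hf'_int.sub hscaled_int))
      ((integrable_gaussianReal_iff hv).mp hf_int)
  rw [integral_sub hf'_int hscaled_int, integral_smul, sub_eq_zero] at hzero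
  rw [hzero, smul_inv_smul₀ (NNReal.coe_ne_zero.mpr hv)]

lemma integrable_eval_gaussianReal (p : ℂ[X]) :
    Integrable (fun t : ℝ ↦ p.eval (t : ℂ)) (gaussianReal μ v) := by
  induction p using Polynomial.induction_on' with
  | add p q hp hq => simp only [eval_add]; exact hp.add hq
  | monomial n a =>
    have hpow : Integrable (fun t : ℝ ↦ ‖t‖ ^ n) (gaussianReal μ v) :=
      (memLp_id_gaussianReal n).integrable_norm_pow'
    refine (hpow.const_mul ‖a‖).mono' (by fun_prop) (ae_of_all _ fun t ↦ ?_)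
    simp

lemma integral_sub_mul_eval_gaussianReal (p : ℂ[X]) :
    ∫ t : ℝ, ((t : ℂ) - μ) * p.eval (t : ℂ) ∂gaussianReal μ v
      = v * ∫ t : ℝ, (derivative p).eval (t : ℂ) ∂gaussianReal μ v := by
  have hmul_int : Integrable (fun t : ℝ ↦ (t - μ) • p.eval (t : ℂ)) (gaussianReal μ v) := by
    refine (integrable_eval_gaussianReal ((X - Polynomial.C (μ : ℂ)) * p)).congr
      (ae_of_all _ fun t ↦ ?_)
    simp
  simpa using integral_sub_smul_gaussianReal (fun t ↦ (p.hasDerivAt (t : ℂ)).comp_ofReal)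
    (integrable_eval_gaussianReal p) (integrable_eval_gaussianReal (derivative p)) hmul_int

lemma ofReal_div_cpow {r : ℝ} (hr : 0 < r) {w : ℂ} (hw : w ∈ slitPlane) (s : ℂ) :
    (r / w) ^ s = (r : ℂ) ^ s * w ^ (-s) := by
  have hr' : (r : ℂ) ≠ 0 := ofReal_ne_zero.mpr hr.ne'
  have hw' : w ≠ 0 := slitPlane_ne_zero hw
  rw [cpow_def_of_ne_zero (div_ne_zero hr' hw'), cpow_def_of_ne_zero hr', cpow_def_of_ne_zero hw',
    div_eq_mul_inv, log_ofReal_mul hr (inv_ne_zero hw'), log_inv w (slitPlane_arg_ne_pi hw),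
    ofReal_log hr.le, ← Complex.exp_add]
  ring_nf

lemma ofReal_sqrt {r : ℝ} (hr : 0 ≤ r) : ((√r : ℝ) : ℂ) = (r : ℂ) ^ (1 / 2 : ℂ) := by
  rw [Real.sqrt_eq_rpow, ofReal_cpow hr]
  norm_num

lemma integral_cexp_quadratic_gaussianReal {b : ℂ} (hb : 2 * v * b.re < 1) (c d : ℂ) :
    ∫ t : ℝ, cexp (b * t ^ 2 + c * t + d) ∂gaussianReal 0 v
      = (1 - 2 * v * b) ^ (-(1 / 2) : ℂ) * cexp (d + v * c ^ 2 / (2 * (1 - 2 * v * b))) := by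
  obtain rfl | hv := eq_or_ne v 0
  · simp
  have hv' : (v : ℂ) ≠ 0 := by exact_mod_cast hv
  set w : ℂ := 1 - 2 * v * b with hw
  have hw_re : 0 < w.re := by simpa [w] using hb
  have hw_slit : w ∈ slitPlane := Or.inl hw_re
  have hcoeff : (-(w / (2 * v))).re < 0 := by
    have : (-(w / (2 * v))).re = -(w.re / (2 * v)) := by
      rw [neg_re, ← ofReal_ofNat, ← ofReal_mul, div_ofReal_re]
    rw [this, neg_neg_iff_pos]
    positivity
  have hvar_pos : 0 < 2 * Real.pi * v := by positivity
  have hsqrt_ne : ((√(2 * Real.pi * v) : ℝ) : ℂ) ≠ 0 :=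
    ofReal_ne_zero.mpr (Real.sqrt_ne_zero'.mpr hvar_pos)
  have hint (t : ℝ) : gaussianPDFReal 0 v t • cexp (b * t ^ 2 + c * t + d)
      = ((√(2 * Real.pi * v) : ℝ) : ℂ)⁻¹ * cexp (-(w / (2 * v)) * t ^ 2 + c * t + d) := by
    rw [gaussianPDFReal, real_smul, ofReal_mul, ofReal_inv, ofReal_exp, mul_assoc,
      ← Complex.exp_add]
    congr 2
    push_cast
    rw [hw]
    field
  have hpi : (Real.pi : ℂ) / - -(w / (2 * v)) = ((2 * Real.pi * v : ℝ) : ℂ) / w := by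
    push_cast
    field
  simp_rw [integral_gaussianReal_eq_integral_smul hv, hint]
  rw [integral_const_mul, integral_cexp_quadratic hcoeff, hpi,
    ofReal_div_cpow hvar_pos hw_slit, ← ofReal_sqrt hvar_pos.le, ← mul_assoc,
    inv_mul_cancel_left₀ hsqrt_ne]
  congr 2
  field

lemma integrable_cexp_quadratic_gaussianReal {b : ℂ} (hb : 2 * v * b.re < 1) (c d : ℂ) :
    Integrable (fun t : ℝ ↦ cexp (b * t ^ 2 + c * t + d)) (gaussianReal 0 v) := by
  have hne : 1 - 2 * v * b ≠ 0 := slitPlane_ne_zero (Or.inl (by simpa using hb))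
  -- The integral of a non-integrable function is `0`, but the closed form never vanishes.
  refine Integrable.of_integral_ne_zero ?_
  rw [integral_cexp_quadratic_gaussianReal hb]
  exact mul_ne_zero (cpow_ne_zero_iff.mpr (Or.inl hne)) (Complex.exp_ne_zero _)

lemma integrable_exp_mul_sq_norm_gaussianReal {r : ℝ} (hr : 2 * v * r < 1) (u : ℂ) :
    Integrable (fun t : ℝ ↦ Real.exp (r * ‖u + t * I‖ ^ 2)) (gaussianReal 0 v) := by
  have hquad := (integrable_cexp_quadratic_gaussianReal (b := r) (by simpa using hr)
    (2 * r * u.im : ℝ) (r * ‖u‖ ^ 2 : ℝ)).norm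
  refine hquad.congr (ae_of_all _ fun t ↦ ?_)
  dsimp only
  rw [norm_exp]
  norm_cast
  congr 1
  simp only [Complex.sq_norm, normSq_apply, add_re, add_im, re_ofReal_mul, im_ofReal_mul,
    I_re, I_im]
  ring

end Gaussian

lemma integral_two_mul_add_mul_I_pow_succ (n : ℕ) (x : ℂ) :
    ∫ t : ℝ, (2 * (x + t * I)) ^ (n + 1) ∂gaussianReal 0 (1 / 2)
      = 2 * x * ∫ t : ℝ, (2 * (x + t * I)) ^ n ∂gaussianReal 0 (1 / 2)
        - 2 * n * ∫ t : ℝ, (2 * (x + t * I)) ^ (n - 1) ∂gaussianReal 0 (1 / 2) := by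
  set w : ℂ[X] := Polynomial.C (2 * x) + Polynomial.C (2 * I) * X with hw
  have hw_eval (k : ℕ) (t : ℝ) : (2 * (x + t * I)) ^ k = (w ^ k).eval (t : ℂ) := by
    simp only [hw, eval_pow, eval_add, eval_mul, eval_C, eval_X]
    ring
  have hw_deriv : derivative (w ^ n) = Polynomial.C (2 * n * I) * w ^ (n - 1) := by
    simp only [hw, derivative_pow, derivative_add, derivative_mul, derivative_C, derivative_X,
      map_mul, map_natCast]
    ring
  have hw_succ : w ^ (n + 1)
      = Polynomial.C (2 * x) * w ^ n + Polynomial.C (2 * I) * (X * w ^ n) := by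
    rw [hw]
    ring
  have hstein := integral_sub_mul_eval_gaussianReal (μ := 0) (v := 1 / 2) (w ^ n)
  simp only [hw_deriv, eval_mul, eval_C, integral_const_mul, ofReal_zero, sub_zero] at hstein
  simp_rw [hw_eval, hw_succ, eval_add]
  rw [integral_add (integrable_eval_gaussianReal _) (integrable_eval_gaussianReal _)]
  simp only [eval_mul, eval_C, eval_X, integral_const_mul, hstein]
  push_cast
  linear_combination
    2 * n * (∫ t : ℝ, (w ^ (n - 1)).eval (t : ℂ) ∂gaussianReal 0 (1 / 2)) * I_mul_I

theorem integral_pow_gaussianReal_eq_aeval_hermiteH (n : ℕ) (x : ℂ) :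
    ∫ t : ℝ, (2 * (x + t * I)) ^ n ∂gaussianReal 0 (1 / 2) = aeval x (hermiteH n) := by
  induction n using Nat.strong_induction_on with
  | _ n ih =>
    cases n with
    | zero => simp [hermiteH]
    | succ n =>
      rw [integral_two_mul_add_mul_I_pow_succ, ih n (by omega), ih (n - 1) (by omega),
        hermiteH_succ_eq_sub]
      simp only [map_sub, map_mul, map_ofNat, map_natCast, aeval_X]

section ExpSeries

variable {α β : Type*} {mα : MeasurableSpace α} {mβ : MeasurableSpace β}
  {μ : Measure α} {ν : Measure β} {f : α → ℂ} {g : β → ℂ}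

lemma integrable_exp_mul_norm_mul_norm {r : ℝ} (hr : 0 ≤ r)
    (hf : AEStronglyMeasurable f μ) (hg : AEStronglyMeasurable g ν)
    (hf_exp : Integrable (fun a ↦ Real.exp (r / 2 * ‖f a‖ ^ 2)) μ)
    (hg_exp : Integrable (fun b ↦ Real.exp (r / 2 * ‖g b‖ ^ 2)) ν) :
    Integrable (fun p : α × β ↦ Real.exp (r * (‖f p.1‖ * ‖g p.2‖))) (μ.prod ν) := by
  refine (hf_exp.mul_prod hg_exp).mono' ?_ (ae_of_all _ fun p ↦ ?_)
  · exact Real.continuous_exp.comp_aestronglyMeasurable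
      ((hf.comp_fst.norm.mul hg.comp_snd.norm).const_mul r)
  · rw [Real.norm_of_nonneg (Real.exp_nonneg _), ← Real.exp_add]
    gcongr
    nlinarith [mul_nonneg hr (sq_nonneg (‖f p.1‖ - ‖g p.2‖))]

lemma integrable_cexp_mul_mul {z : ℂ}
    (hf : AEStronglyMeasurable f μ) (hg : AEStronglyMeasurable g ν)
    (hfg : Integrable (fun p : α × β ↦ Real.exp (‖z‖ * (‖f p.1‖ * ‖g p.2‖))) (μ.prod ν)) :
    Integrable (fun p : α × β ↦ cexp (z * (f p.1 * g p.2))) (μ.prod ν) := by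
  refine hfg.mono' (Complex.continuous_exp.comp_aestronglyMeasurable
    ((hf.comp_fst.mul hg.comp_snd).const_mul z)) (ae_of_all _ fun p ↦ ?_)
  simpa only [norm_mul] using norm_exp_le_exp_norm (z * (f p.1 * g p.2))

lemma hasSum_pow_div_factorial_mul_integral_pow [SFinite μ] [SFinite ν] {z : ℂ}
    (hf : AEStronglyMeasurable f μ) (hg : AEStronglyMeasurable g ν)
    (hfg : Integrable (fun p : α × β ↦ Real.exp (‖z‖ * (‖f p.1‖ * ‖g p.2‖))) (μ.prod ν)) :
    HasSum (fun n : ℕ ↦ z ^ n / n.factorial * (∫ a, f a ^ n ∂μ) * ∫ b, g b ^ n ∂ν)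
      (∫ p, cexp (z * (f p.1 * g p.2)) ∂μ.prod ν) := by
  have hterm (n : ℕ) : z ^ n / n.factorial * (∫ a, f a ^ n ∂μ) * ∫ b, g b ^ n ∂ν
      = ∫ p, (z * (f p.1 * g p.2)) ^ n / n.factorial ∂μ.prod ν := by
    rw [mul_assoc, ← integral_prod_mul, ← integral_const_mul]
    congr with p
    ring
  have hbound (p : α × β) := NormedSpace.expSeries_div_hasSum_exp (‖z‖ * (‖f p.1‖ * ‖g p.2‖))
  simp_rw [← Real.exp_eq_exp_ℝ] at hbound
  simp_rw [hterm]
  refine hasSum_integral_of_dominated_convergence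
    (fun n p ↦ (‖z‖ * (‖f p.1‖ * ‖g p.2‖)) ^ n / n.factorial)
    (fun n ↦ (by fun_prop : Continuous fun w : ℂ ↦ (z * w) ^ n / n.factorial)
      |>.comp_aestronglyMeasurable (hf.comp_fst.mul hg.comp_snd))
    (fun n ↦ ae_of_all _ fun p ↦ by simp)
    (ae_of_all _ fun p ↦ (hbound p).summable) ?_ (ae_of_all _ fun p ↦ ?_)
  · simpa only [(hbound _).tsum_eq] using hfg
  · rw [Complex.exp_eq_exp_ℂ]
    exact NormedSpace.expSeries_div_hasSum_exp _

end ExpSeries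

lemma re_four_mul_sq_lt_one {z : ℂ} (hz : ‖z‖ < 1 / 2) : (4 * z ^ 2).re < 1 :=
  calc (4 * z ^ 2).re ≤ ‖4 * z ^ 2‖ := re_le_norm _
    _ = 4 * ‖z‖ ^ 2 := by simp
    _ < 1 := by nlinarith [norm_nonneg z]

lemma integrable_exp_mul_norm_mul_norm_gaussianReal {r : ℝ} (hr₀ : 0 ≤ r) (hr : r < 1 / 2)
    (x y : ℂ) :
    Integrable (fun p : ℝ × ℝ ↦
        Real.exp (r * (‖2 * (x + p.1 * I)‖ * ‖2 * (y + p.2 * I)‖)))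
      ((gaussianReal 0 (1 / 2)).prod (gaussianReal 0 (1 / 2))) := by
  have hmarginal (u : ℂ) : Integrable (fun t : ℝ ↦ Real.exp (r / 2 * ‖2 * (u + t * I)‖ ^ 2))
      (gaussianReal 0 (1 / 2)) := by
    have hvar : 2 * ((1 / 2 : ℝ≥0) : ℝ) * (2 * r) < 1 := by
      push_cast
      linarith
    refine (integrable_exp_mul_sq_norm_gaussianReal hvar u).congr (ae_of_all _ fun t ↦ ?_)
    simp only [norm_mul, mul_pow, Complex.norm_ofNat]
    ring_nf
  exact integrable_exp_mul_norm_mul_norm (f := fun s : ℝ ↦ 2 * (x + s * I))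
    (g := fun t : ℝ ↦ 2 * (y + t * I)) hr₀ (by fun_prop) (by fun_prop) (hmarginal x) (hmarginal y)

lemma integral_cexp_mul_mul_gaussianReal {x y z : ℂ} (hz : ‖z‖ < 1 / 2) :
    ∫ p : ℝ × ℝ, cexp (z * (2 * (x + p.1 * I) * (2 * (y + p.2 * I))))
        ∂(gaussianReal 0 (1 / 2)).prod (gaussianReal 0 (1 / 2))
      = (1 - 4 * z ^ 2) ^ (-(1 / 2) : ℂ)
        * cexp (y ^ 2 - (y - 2 * z * x) ^ 2 / (1 - 4 * z ^ 2)) := by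
  have hre := re_four_mul_sq_lt_one hz
  have hne : 1 - 4 * z ^ 2 ≠ 0 := slitPlane_ne_zero (Or.inl (by simpa using hre))
  have hinner (s : ℝ) :
      ∫ t : ℝ, cexp (z * (2 * (x + s * I) * (2 * (y + t * I)))) ∂gaussianReal 0 (1 / 2)
        = cexp (4 * z ^ 2 * s ^ 2 + 4 * z * (y - 2 * z * x) * I * s
          + 4 * z * x * (y - z * x)) := by
    have hlin := integral_cexp_quadratic_gaussianReal (v := 1 / 2) (b := 0) (by simp)
      (4 * z * (x + s * I) * I) (4 * z * (x + s * I) * y)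
    simp only [zero_mul, mul_zero, sub_zero, zero_add, one_cpow, one_mul] at hlin
    convert hlin using 1
    · congr with t
      ring_nf
    · congr 1
      push_cast
      linear_combination
        4 * z ^ 2 * (s ^ 2 * (1 - I ^ 2) - 2 * s * x * I - x ^ 2) * I_sq
  have hint := integrable_exp_mul_norm_mul_norm_gaussianReal (norm_nonneg z) hz x y
  rw [integral_prod _ (integrable_cexp_mul_mul (f := fun s : ℝ ↦ 2 * (x + s * I))
    (g := fun t : ℝ ↦ 2 * (y + t * I)) (by fun_prop) (by fun_prop) hint)]
  simp_rw [hinner]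
  rw [integral_cexp_quadratic_gaussianReal (by simpa using hre)]
  have hvar : 2 * ((1 / 2 : ℝ≥0) : ℂ) * (4 * z ^ 2) = 4 * z ^ 2 := by
    push_cast
    ring
  have hsq : (4 * z * (y - 2 * z * x) * I) ^ 2 = -16 * z ^ 2 * (y - 2 * z * x) ^ 2 := by
    rw [mul_pow, I_sq]
    ring
  rw [hvar, hsq]
  congr 2
  push_cast
  field

theorem mehler_formula_general {x y z : ℂ} (hz : ‖z‖ < 1 / 2) :
    HasSum (fun n : ℕ ↦ z ^ n / n.factorial * aeval x (hermiteH n) * aeval y (hermiteH n))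
      ((1 - 4 * z ^ 2) ^ (-(1 / 2) : ℂ)
        * cexp (y ^ 2 - (y - 2 * z * x) ^ 2 / (1 - 4 * z ^ 2))) := by
  simp_rw [← integral_cexp_mul_mul_gaussianReal hz, ← integral_pow_gaussianReal_eq_aeval_hermiteH]
  exact hasSum_pow_div_factorial_mul_integral_pow (by fun_prop) (by fun_prop)
    (integrable_exp_mul_norm_mul_norm_gaussianReal (norm_nonneg z) hz x y)

lemma aeval_ofReal_hermiteH (n : ℕ) (x : ℝ) :
    aeval (x : ℂ) (hermiteH n) = ((hermiteH n).eval x : ℝ) :=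
  aeval_algebraMap_apply_eq_algebraMap_eval x (hermiteH n)

lemma mehler_kernel_ofReal {x y z : ℝ} (hz : |z| ≤ 1 / 2) :
    ((1 - 4 * (z : ℂ) ^ 2) ^ (-(1 / 2) : ℂ)
        * cexp (y ^ 2 - (y - 2 * z * x) ^ 2 / (1 - 4 * z ^ 2)))
      = (((√(1 - 4 * z ^ 2))⁻¹
        * Real.exp (y ^ 2 - (y - 2 * z * x) ^ 2 / (1 - 4 * z ^ 2)) : ℝ) : ℂ) := by
  have hpos : 0 ≤ 1 - 4 * z ^ 2 := by nlinarith [sq_abs z, abs_nonneg z]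
  rw [ofReal_mul, ofReal_inv, ofReal_sqrt hpos, cpow_neg]
  push_cast
  rfl

/-- Mehler's formula: for `|z| < 1/2`,
`∑ (zⁿ/n!) Hₙ(x) Hₙ(y) = (1-4z²)^{-1/2} exp(y² - (y-2zx)²/(1-4z²))`. -/
theorem mehler_formula (x y z : ℝ) (hz : |z| < 1 / 2) :
    HasSum (fun n : ℕ => z ^ n / (n.factorial : ℝ)
        * (hermiteH n).eval x * (hermiteH n).eval y)
      ((Real.sqrt (1 - 4 * z ^ 2))⁻¹
        * Real.exp (y ^ 2 - (y - 2 * z * x) ^ 2 / (1 - 4 * z ^ 2))) := by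
  rw [← hasSum_ofReal, ← mehler_kernel_ofReal hz.le]
  simpa [aeval_ofReal_hermiteH] using
    mehler_formula_general (x := x) (y := y) (z := z) (by simpa using hz)
end

section
/- The series ∑_{n=0}^∞ (e_n(0))² diverges; equivalently, the sequence of partial sums ∑_{n=0}^N (e_n(0))² tends to +∞ as N → ∞. (Hence the e-product ⟨δ, δ⟩_e of the Dirac delta with itself, computed with respect to the Hermite basis, does not exist.) Equivalently, ∑_{n=0}^∞ (e_n(0))² = (1/√π)·∑_{l=0}^∞ (2l)!/(4^l·(l!)²), and the latter series of nonnegative terms diverges. -/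
open MeasureTheory Polynomial Filter Topology

/-- The `n`-th Hermite function. -/
noncomputable def hermiteFun (n : ℕ) (x : ℝ) : ℝ :=
  (Real.sqrt (2 ^ n * (n.factorial : ℝ) * Real.sqrt Real.pi))⁻¹
    * (hermiteH n).eval x * Real.exp (-x ^ 2 / 2)

/-!
The polynomial `hermiteH n` is a rescaling of Mathlib's probabilists' polynomial `hermite n`, whose
constant term is `(-1) ^ l * (2 * l - 1)‼` for `n = 2 * l` and `0` for odd `n`. Normalizing turns
these values into `e_{2l}(0) ^ 2 = centralBinom l / (4 ^ l * √π)`. Since `centralBinom l` is the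
largest of the `2 * l + 1` binomial coefficients summing to `4 ^ l`, the resulting series dominates
`∑ 1 / (2 * l + 1)`.
-/

open scoped Nat

theorem hermiteH_eq_hermite_comp (n : ℕ) :
    hermiteH n = C (√2 ^ n) * ((hermite n).map (Int.castRingHom ℝ)).comp (C √2 * X) := by
  induction n with
  | zero => simp [hermiteH]
  | succ n ih =>
    have sqrt_two_sq : (C √2 : ℝ[X]) ^ 2 = 2 := by
      rw [← C_pow, Real.sq_sqrt zero_le_two, C_ofNat]
    rw [hermiteH, ih, hermite_succ]
    simp only [derivative_C_mul, derivative_comp, derivative_X, derivative_map, mul_one,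
      Polynomial.map_sub, Polynomial.map_mul, map_X, sub_comp, mul_comp, X_comp]
    rw [C_pow, C_pow, ← sqrt_two_sq]
    ring

theorem eval_zero_hermiteH (n : ℕ) :
    (hermiteH n).eval 0 = √2 ^ n * ((hermite n).coeff 0 : ℝ) := by
  simp [hermiteH_eq_hermite_comp, eval_comp, ← coeff_zero_eq_eval_zero]

theorem hermiteFun_sq (n : ℕ) (x : ℝ) :
    hermiteFun n x ^ 2 =
      (hermiteH n).eval x ^ 2 * Real.exp (-x ^ 2) / (2 ^ n * n ! * √Real.pi) := by
  have exp_half_sq : Real.exp (-x ^ 2 / 2) ^ 2 = Real.exp (-x ^ 2) := by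
    rw [← Real.exp_nat_mul]
    congr 1
    ring
  rw [hermiteFun, mul_pow, mul_pow, inv_pow, Real.sq_sqrt (by positivity), exp_half_sq]
  ring

theorem hermiteFun_zero_sq (n : ℕ) :
    hermiteFun n 0 ^ 2 = ((hermite n).coeff 0 : ℝ) ^ 2 / (n ! * √Real.pi) := by
  have sqrt_two_pow_sq : (√2 ^ n) ^ 2 = (2 : ℝ) ^ n := by
    rw [pow_right_comm, Real.sq_sqrt zero_le_two]
  rw [hermiteFun_sq, eval_zero_hermiteH, mul_pow, sqrt_two_pow_sq]
  simp [mul_assoc, mul_div_mul_left]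

theorem hermiteFun_zero_of_odd {n : ℕ} (hn : Odd n) : hermiteFun n 0 = 0 := by
  simp [← sq_eq_zero_iff, hermiteFun_zero_sq, coeff_hermite_of_odd_add (k := 0) hn]

theorem factorial_two_mul_eq_doubleFactorial_mul (n : ℕ) :
    (2 * n)! = (2 * n - 1)‼ * (2 ^ n * n !) := by
  cases n with
  | zero => rfl
  | succ n =>
    rw [← Nat.doubleFactorial_two_mul, mul_comm (_‼)]
    exact Nat.factorial_eq_mul_doubleFactorial (2 * n + 1)

theorem centralBinom_div_four_pow {K : Type*} [Field K] [CharZero K] (n : ℕ) :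
    (n.centralBinom : K) / 4 ^ n = (2 * n)! / (4 ^ n * (n ! : K) ^ 2) := by
  rw [Nat.centralBinom, Nat.cast_choose K (Nat.le_mul_of_pos_left n two_pos),
    show 2 * n - n = n by lia, div_div, sq, mul_comm (4 ^ n)]

theorem hermiteFun_two_mul_zero_sq (l : ℕ) :
    hermiteFun (2 * l) 0 ^ 2 = (√Real.pi)⁻¹ * (l.centralBinom / 4 ^ l) := by
  have coeff_sq : ((hermite (2 * l)).coeff 0 : ℝ) ^ 2 = ((2 * l - 1)‼ : ℝ) ^ 2 := by
    have coeff_eq := coeff_hermite_explicit l 0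
    simp only [add_zero, Nat.choose_zero_right, Nat.cast_one, mul_one] at coeff_eq
    simp [coeff_eq, mul_pow, ← pow_mul']
  have four_pow : (4 : ℝ) ^ l = (2 ^ l) ^ 2 := by
    rw [pow_right_comm]
    norm_num
  have doubleFactorial_ne_zero : ((2 * l - 1)‼ : ℝ) ≠ 0 := mod_cast (Nat.doubleFactorial_pos _).ne'
  rw [hermiteFun_zero_sq, coeff_sq, centralBinom_div_four_pow,
    factorial_two_mul_eq_doubleFactorial_mul, four_pow]
  push_cast
  field_simp

theorem sum_range_two_mul {M : Type*} [AddCommMonoid M] (f : ℕ → M) (n : ℕ) :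
    ∑ i ∈ Finset.range (2 * n), f i = ∑ i ∈ Finset.range n, (f (2 * i) + f (2 * i + 1)) := by
  induction n with
  | zero => simp
  | succ n ih => rw [mul_add_one, Finset.sum_range_succ, Finset.sum_range_succ,
      Finset.sum_range_succ, ih, add_assoc]

theorem sum_range_two_mul_hermiteFun_zero_sq (N : ℕ) :
    ∑ n ∈ Finset.range (2 * N), hermiteFun n 0 ^ 2 =
      (√Real.pi)⁻¹ * ∑ l ∈ Finset.range N, (l.centralBinom : ℝ) / 4 ^ l := by
  simp [sum_range_two_mul, hermiteFun_two_mul_zero_sq,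
    hermiteFun_zero_of_odd (odd_two_mul_add_one _), Finset.mul_sum]

theorem one_div_two_mul_add_one_le_centralBinom_div_four_pow {K : Type*} [Field K] [LinearOrder K]
    [IsStrictOrderedRing K] (n : ℕ) : 1 / (2 * n + 1 : K) ≤ n.centralBinom / 4 ^ n := by
  rw [div_le_div_iff₀ (by positivity) (by positivity), one_mul, mul_comm]
  exact_mod_cast Nat.four_pow_le_two_mul_add_one_mul_central_binom n

theorem tendsto_sum_range_centralBinom_div_four_pow_atTop :
    Tendsto (fun N ↦ ∑ l ∈ Finset.range N, (l.centralBinom : ℝ) / 4 ^ l) atTop atTop := by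
  have half_harmonic_le (l : ℕ) :
      1 / 2 * (1 / (l + 1 : ℝ)) ≤ l.centralBinom / 4 ^ l :=
    calc 1 / 2 * (1 / (l + 1 : ℝ)) = 1 / (2 * l + 2) := by field_simp
      _ ≤ 1 / (2 * l + 1) := by gcongr; norm_num
      _ ≤ l.centralBinom / 4 ^ l := one_div_two_mul_add_one_le_centralBinom_div_four_pow l
  refine tendsto_atTop_mono (fun N ↦ ?_)
    (Real.tendsto_sum_range_one_div_nat_succ_atTop.const_mul_atTop one_half_pos)
  rw [Finset.mul_sum]
  exact Finset.sum_le_sum fun l _ ↦ half_harmonic_le l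

theorem tendsto_sum_range_hermiteFun_zero_sq_atTop :
    Tendsto (fun N ↦ ∑ n ∈ Finset.range N, hermiteFun n 0 ^ 2) atTop atTop := by
  have partial_sums_mono : Monotone fun N ↦ ∑ n ∈ Finset.range N, hermiteFun n 0 ^ 2 :=
    (Finset.sum_mono_set_of_nonneg fun _ ↦ sq_nonneg _).comp Finset.range_mono
  have even_partial_sums_tendsto :
      Tendsto ((fun N ↦ ∑ n ∈ Finset.range N, hermiteFun n 0 ^ 2) ∘ (2 * ·)) atTop atTop := by
    simp only [Function.comp_def, sum_range_two_mul_hermiteFun_zero_sq]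
    exact tendsto_sum_range_centralBinom_div_four_pow_atTop.const_mul_atTop (by positivity)
  exact tendsto_atTop_of_monotone_of_subseq partial_sums_mono even_partial_sums_tendsto

/-- the series `∑ₙ (eₙ(0))²` diverges to `+∞` (so `⟨δ,δ⟩_e` does not
exist); its partial sums equal `(1/√π) ∑_{l<N} (2l)!/(4^l (l!)²)`, a divergent
series of nonnegative terms. -/
theorem eProduct_delta_delta_diverges :
    Tendsto (fun N => ∑ n ∈ Finset.range N, (hermiteFun n 0) ^ 2) atTop atTop ∧
    (∀ N : ℕ, ∑ n ∈ Finset.range (2 * N), (hermiteFun n 0) ^ 2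
      = (Real.sqrt Real.pi)⁻¹ * ∑ l ∈ Finset.range N,
          ((2 * l).factorial : ℝ) / (4 ^ l * ((l.factorial : ℝ)) ^ 2)) ∧
    Tendsto (fun N => ∑ l ∈ Finset.range N,
        ((2 * l).factorial : ℝ) / (4 ^ l * ((l.factorial : ℝ)) ^ 2))
      atTop atTop := by
  simp only [← centralBinom_div_four_pow]
  exact ⟨tendsto_sum_range_hermiteFun_zero_sq_atTop, sum_range_two_mul_hermiteFun_zero_sq,
    tendsto_sum_range_centralBinom_div_four_pow_atTop⟩
end

section
/- Let k, l ∈ ℕ with k + l odd. Then for every n ∈ ℕ, (d^k e_n/dx^k)(0) · (d^l e_n/dx^l)(0) = 0; consequently the series ∑_{n=0}^∞ (d^k e_n/dx^k)(0)·(d^l e_n/dx^l)(0) converges with sum 0 (i.e. the e-product ⟨δ^{(k)}, δ^{(l)}⟩_e of the corresponding derivatives of the Dirac delta equals 0, up to the sign (−1)^{k+l}). -/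
open MeasureTheory Polynomial Filter Topology

/-!
The Hermite function `eₙ` has the parity of `n`, and each differentiation flips the parity, so
`eₙ^{(k)}` has the parity of `n + k` and vanishes at `0` when `n + k` is odd. If `k + l` is odd,
then exactly one of `n + k` and `n + l` is odd, so one factor of each term vanishes.
-/

section Parity

variable {𝕜 F : Type*} [NontriviallyNormedField 𝕜] [NormedAddCommGroup F] [NormedSpace 𝕜 F]
  {f : 𝕜 → F}

theorem iteratedDeriv_neg_of_forall_neg_eq_smul {c : 𝕜} (hf : ∀ x, f (-x) = c • f x) (k : ℕ)
    (x : 𝕜) : iteratedDeriv k f (-x) = ((-1) ^ k * c) • iteratedDeriv k f x := by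
  have hcomp : (-1 : 𝕜) ^ k • iteratedDeriv k f (-x) = c • iteratedDeriv k f x := by
    rw [← iteratedDeriv_comp_neg, funext hf, iteratedDeriv_fun_const_smul_field]
  rw [mul_smul, ← hcomp, smul_smul, ← mul_pow, neg_one_mul, neg_neg, one_pow, one_smul]

theorem iteratedDeriv_zero_eq_zero_of_odd_add [IsAddTorsionFree F] {n k : ℕ}
    (hf : ∀ x, f (-x) = (-1 : 𝕜) ^ n • f x) (hnk : Odd (n + k)) : iteratedDeriv k f 0 = 0 := by
  have hodd : Function.Odd (iteratedDeriv k f) := fun x ↦ by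
    rw [iteratedDeriv_neg_of_forall_neg_eq_smul hf, ← pow_add, add_comm, hnk.neg_one_pow,
      neg_one_smul]
  exact hodd.map_zero

end Parity

theorem derivative_comp_neg_X {R : Type*} [CommRing R] (p : R[X]) :
    (derivative p).comp (-X) = -derivative (p.comp (-X)) := by
  rw [derivative_comp, derivative_neg, derivative_X, neg_one_mul, neg_neg]

theorem hermiteH_comp_neg_X (n : ℕ) : (hermiteH n).comp (-X) = (-1 : ℝ) ^ n • hermiteH n := by
  induction n with
  | zero => simp only [hermiteH, one_comp, pow_zero, one_smul]
  | succ n ih =>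
    calc (hermiteH (n + 1)).comp (-X)
        = 2 * -X * (hermiteH n).comp (-X) + derivative ((hermiteH n).comp (-X)) := by
          simp only [hermiteH, sub_comp, mul_comp, ofNat_comp, X_comp, derivative_comp_neg_X,
            sub_neg_eq_add, Nat.cast_ofNat]
      _ = (-1 : ℝ) ^ (n + 1) • hermiteH (n + 1) := by
          rw [ih, derivative_smul, hermiteH, mul_neg, neg_mul, mul_smul_comm]
          module

theorem hermiteFun_neg (n : ℕ) (x : ℝ) : hermiteFun n (-x) = (-1) ^ n * hermiteFun n x := by
  have heval : (hermiteH n).eval (-x) = (-1) ^ n * (hermiteH n).eval x := by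
    simpa using congrArg (eval x) (hermiteH_comp_neg_X n)
  rw [hermiteFun, hermiteFun, heval, neg_sq]
  ring

theorem iteratedDeriv_hermiteFun_zero_of_odd_add {n k : ℕ} (hnk : Odd (n + k)) :
    iteratedDeriv k (hermiteFun n) 0 = 0 :=
  iteratedDeriv_zero_eq_zero_of_odd_add (hermiteFun_neg n) hnk

/-- if `k + l` is odd then every term `eₙ^{(k)}(0) · eₙ^{(l)}(0)`
vanishes, so the series defining `⟨δ^{(k)}, δ^{(l)}⟩_e` converges with sum `0`. -/
theorem eProduct_delta_derivatives_odd (k l : ℕ) (h : Odd (k + l)) :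
    (∀ n : ℕ, iteratedDeriv k (hermiteFun n) 0 * iteratedDeriv l (hermiteFun n) 0 = 0) ∧
    HasSum (fun n : ℕ =>
      iteratedDeriv k (hermiteFun n) 0 * iteratedDeriv l (hermiteFun n) 0) 0 := by
  have hterm (n : ℕ) :
      iteratedDeriv k (hermiteFun n) 0 * iteratedDeriv l (hermiteFun n) 0 = 0 := by
    have hparity : Odd (n + k) ∨ Odd (n + l) := by grind
    exact mul_eq_zero.mpr <| hparity.imp iteratedDeriv_hermiteFun_zero_of_odd_add
      iteratedDeriv_hermiteFun_zero_of_odd_add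
  exact ⟨hterm, by simpa only [hterm] using hasSum_zero⟩
end

section
/- The series ∑_{j=0}^∞ (−4)^j · Γ(j + 1/2)² / (2j)! converges and its sum equals π/√2. -/
open Filter Topology

/-!
By Legendre's duplication formula the `j`-th term is `π` times the binomial coefficient
`Ring.choose (-1/2) j`, so the claim is `π` times the binomial series of `(1 + x) ^ (-1/2)` at the
boundary point `x = 1`. For `-1 < r ≤ 0` the numbers `(-1) ^ n * Ring.choose r n` are the partial
products of `∏ (1 - (r + 1) / (k + 1))`, which decrease to `0` because the harmonic series diverges;
hence the series of the `Ring.choose r n` is alternating and converges, and Pascal's rule extends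
this to all `r > -1`. Abel's limit theorem identifies the sum with `2 ^ r`.
-/

lemma antitone_prod_range_one_sub {R : Type*} [CommRing R] [PartialOrder R] [IsOrderedRing R]
    {f : ℕ → R} (hf₀ : ∀ n, 0 ≤ f n) (hf₁ : ∀ n, f n ≤ 1) :
    Antitone fun n => ∏ k ∈ Finset.range n, (1 - f k) := by
  refine antitone_nat_of_succ_le fun n => ?_
  rw [Finset.prod_range_succ]
  exact mul_le_of_le_one_right (Finset.prod_nonneg fun k _ => sub_nonneg.2 (hf₁ k))
    (sub_le_self 1 (hf₀ n))

lemma tendsto_prod_range_one_sub_zero {f : ℕ → ℝ} (hf₁ : ∀ n, f n ≤ 1)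
    (hf : Tendsto (fun n => ∑ k ∈ Finset.range n, f k) atTop atTop) :
    Tendsto (fun n => ∏ k ∈ Finset.range n, (1 - f k)) atTop (𝓝 0) := by
  refine squeeze_zero (g := fun n => Real.exp (-∑ k ∈ Finset.range n, f k))
    (fun n => Finset.prod_nonneg fun k _ => sub_nonneg.2 (hf₁ k)) (fun n => ?_)
    (Real.tendsto_exp_neg_atTop_nhds_zero.comp hf)
  rw [← Finset.sum_neg_distrib, Real.exp_sum]
  exact Finset.prod_le_prod (fun k _ => sub_nonneg.2 (hf₁ k))
    fun k _ => Real.one_sub_le_exp_neg (f k)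

section BinomialCoefficients

variable {K : Type*} [Field K] [CharZero K]

lemma ringChoose_succ_right (r : K) (n : ℕ) :
    Ring.choose r (n + 1) = Ring.choose r n * ((r - n) / (n + 1)) := by
  have h := Ring.choose_smul_choose r n.le_succ
  simp only [Nat.succ_eq_add_one, Nat.choose_succ_self_right, nsmul_eq_mul, Nat.cast_add,
    Nat.cast_one, Nat.add_sub_cancel_left, Ring.choose_one_right] at h
  rw [← mul_div_assoc, eq_div_iff n.cast_add_one_ne_zero, mul_comm, h]

lemma neg_one_pow_mul_ringChoose_eq_prod (r : K) (n : ℕ) :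
    (-1) ^ n * Ring.choose r n = ∏ k ∈ Finset.range n, (1 - (r + 1) / (k + 1)) := by
  induction n with
  | zero => simp
  | succ n ih =>
    have hn : (n : K) + 1 ≠ 0 := n.cast_add_one_ne_zero
    rw [Finset.prod_range_succ, ← ih, ringChoose_succ_right]
    field_simp
    ring

end BinomialCoefficients

lemma sum_range_succ_ringChoose_add_one {R : Type*} [NonAssocRing R] [Pow R ℕ] [NatPowAssoc R]
    [BinomialRing R] (r : R) (N : ℕ) :
    ∑ n ∈ Finset.range (N + 1), Ring.choose (r + 1) n =
      ∑ n ∈ Finset.range N, Ring.choose r n + ∑ n ∈ Finset.range (N + 1), Ring.choose r n := by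
  simp only [Finset.sum_range_succ', Ring.choose_succ_succ, Finset.sum_add_distrib,
    Ring.choose_zero_right, add_assoc]

lemma exists_tendsto_sum_ringChoose_of_nonpos {r : ℝ} (hr : -1 < r) (hr₀ : r ≤ 0) :
    ∃ l, Tendsto (fun N => ∑ n ∈ Finset.range N, Ring.choose r n) atTop (𝓝 l) := by
  have factor_nonneg (k : ℕ) : 0 ≤ (r + 1) / (k + 1) := div_nonneg (by linarith) (by positivity)
  have factor_le_one (k : ℕ) : (r + 1) / (k + 1) ≤ 1 :=
    div_le_one_of_le₀ (by linarith [k.cast_nonneg (α := ℝ)]) (by positivity)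
  have harmonic_diverges :
      Tendsto (fun n => ∑ k ∈ Finset.range n, (r + 1) / ((k : ℝ) + 1)) atTop atTop := by
    simpa only [Finset.mul_sum, mul_one_div] using
      Real.tendsto_sum_range_one_div_nat_succ_atTop.const_mul_atTop (neg_lt_iff_pos_add.1 hr)
  have alternating := (antitone_prod_range_one_sub factor_nonneg factor_le_one)
    |>.tendsto_alternating_series_of_tendsto_zero
      (tendsto_prod_range_one_sub_zero factor_le_one harmonic_diverges)
  simpa only [← neg_one_pow_mul_ringChoose_eq_prod, ← mul_assoc, ← mul_pow, neg_one_mul, neg_neg,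
    one_pow, one_mul] using alternating

lemma exists_tendsto_sum_ringChoose {r : ℝ} (hr : -1 < r) :
    ∃ l, Tendsto (fun N => ∑ n ∈ Finset.range N, Ring.choose r n) atTop (𝓝 l) := by
  obtain ⟨m, hm⟩ := exists_nat_ge r
  induction m generalizing r with
  | zero => exact exists_tendsto_sum_ringChoose_of_nonpos hr (by simpa using hm)
  | succ m ih =>
    rcases le_or_gt r 0 with hr₀ | hr₀
    · exact exists_tendsto_sum_ringChoose_of_nonpos hr hr₀
    · push_cast at hm
      obtain ⟨l, hl⟩ := ih (r := r - 1) (by linarith) (by linarith)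
      refine ⟨l + l, (tendsto_add_atTop_iff_nat 1).1 ?_⟩
      have pascal := sum_range_succ_ringChoose_add_one (r - 1)
      rw [sub_add_cancel] at pascal
      simpa only [pascal] using hl.add ((tendsto_add_atTop_iff_nat 1).2 hl)

lemma hasSum_ringChoose_mul_pow (r : ℝ) {x : ℝ} (hx : |x| < 1) :
    HasSum (fun n => Ring.choose r n * x ^ n) ((1 + x) ^ r) := by
  have hx_ball : x ∈ Metric.eball (0 : ℝ) 1 := by
    simpa [enorm_eq_nnnorm, ← NNReal.coe_lt_coe] using hx
  simpa [-FormalMultilinearSeries.apply_eq_prod_smul_coeff] using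
    (Real.one_add_rpow_hasFPowerSeriesOnBall_zero (a := r)).hasSum hx_ball

theorem tendsto_sum_ringChoose {r : ℝ} (hr : -1 < r) :
    Tendsto (fun N => ∑ n ∈ Finset.range N, Ring.choose r n) atTop (𝓝 (2 ^ r)) := by
  obtain ⟨l, hl⟩ := exists_tendsto_sum_ringChoose hr
  have abel_limit : Tendsto (fun x : ℝ => (1 + x) ^ r) (𝓝[<] 1) (𝓝 l) := by
    refine (Real.tendsto_tsum_powerSeries_nhdsWithin_lt hl).congr' ?_
    filter_upwards [Ioo_mem_nhdsLT (show (-1 : ℝ) < 1 by norm_num)] with x hx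
    exact (hasSum_ringChoose_mul_pow r (abs_lt.2 hx)).tsum_eq
  have continuity_limit : Tendsto (fun x : ℝ => (1 + x) ^ r) (𝓝[<] 1) (𝓝 (2 ^ r)) := by
    have h : ContinuousAt (fun x : ℝ => (1 + x) ^ r) 1 :=
      ContinuousAt.rpow_const (by fun_prop) (by norm_num)
    simpa only [one_add_one_eq_two] using h.tendsto.mono_left nhdsWithin_le_nhds
  rwa [← tendsto_nhds_unique abel_limit continuity_limit]

lemma gamma_add_nat {s : ℝ} (hs : ∀ m : ℕ, s ≠ -m) (n : ℕ) :
    Real.Gamma (s + n) = (-1) ^ n * n.factorial * Ring.choose (-s) n * Real.Gamma s := by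
  induction n with
  | zero => simp
  | succ n ih =>
    have hsn : s + n ≠ 0 := fun h => hs n (eq_neg_of_add_eq_zero_left h)
    have hn : (n : ℝ) + 1 ≠ 0 := n.cast_add_one_ne_zero
    rw [Nat.cast_succ, ← add_assoc, Real.Gamma_add_one hsn, ih, ringChoose_succ_right,
      Nat.factorial_succ]
    push_cast
    field_simp
    ring

lemma four_pow_mul_factorial_mul_gamma_nat_add_half (j : ℕ) :
    4 ^ j * j.factorial * Real.Gamma (j + 1 / 2) = (2 * j).factorial * √Real.pi := by
  have duplication : Real.Gamma (j + 1 / 2) * j.factorial =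
      (2 * j).factorial * (4 ^ j)⁻¹ * √Real.pi := by
    have h := Real.Gamma_mul_Gamma_add_half ((j : ℝ) + 1 / 2)
    rw [show (j : ℝ) + 1 / 2 + 1 / 2 = j + 1 by ring,
      show 2 * ((j : ℝ) + 1 / 2) = (2 * j : ℕ) + 1 by push_cast; ring, sub_add_cancel_right,
      Real.Gamma_nat_eq_factorial, Real.Gamma_nat_eq_factorial, Real.rpow_neg zero_le_two,
      Real.rpow_natCast, pow_mul] at h
    norm_num1 at h ⊢
    exact h
  rw [mul_assoc, mul_comm (j.factorial : ℝ), duplication]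
  field_simp

lemma abel_term_eq_pi_mul_ringChoose (j : ℕ) :
    (-4 : ℝ) ^ j * Real.Gamma (j + 1 / 2) ^ 2 / (2 * j).factorial =
      Real.pi * Ring.choose (-(1 / 2) : ℝ) j := by
  have half_ne_neg_nat (m : ℕ) : (1 / 2 : ℝ) ≠ -m := by
    linarith [m.cast_nonneg (α := ℝ)]
  have gamma_eq : Real.Gamma (j + 1 / 2) =
      (-1) ^ j * j.factorial * Ring.choose (-(1 / 2) : ℝ) j * √Real.pi := by
    rw [add_comm, gamma_add_nat half_ne_neg_nat, Real.Gamma_one_half_eq]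
  rw [div_eq_iff (by positivity)]
  calc (-4 : ℝ) ^ j * Real.Gamma (j + 1 / 2) ^ 2
      = (-4) ^ j * Real.Gamma (j + 1 / 2) *
          ((-1) ^ j * j.factorial * Ring.choose (-(1 / 2) : ℝ) j * √Real.pi) := by
        rw [← gamma_eq]; ring
    _ = 4 ^ j * j.factorial * Real.Gamma (j + 1 / 2) *
          (Ring.choose (-(1 / 2) : ℝ) j * √Real.pi) := by
        rw [show (4 : ℝ) ^ j = (-4) ^ j * (-1) ^ j by rw [← mul_pow]; norm_num]; ring
    _ = (2 * j).factorial * Ring.choose (-(1 / 2) : ℝ) j * (√Real.pi * √Real.pi) := by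
        rw [four_pow_mul_factorial_mul_gamma_nat_add_half]; ring
    _ = Real.pi * Ring.choose (-(1 / 2) : ℝ) j * (2 * j).factorial := by
        rw [Real.mul_self_sqrt Real.pi_nonneg]; ring

/-- the (conditionally convergent) series
`∑ⱼ (-4)ʲ Γ(j+1/2)² / (2j)!` converges to `π/√2`. -/
theorem abel_series_a00 :
    Tendsto (fun N => ∑ j ∈ Finset.range N,
        (-4 : ℝ) ^ j * (Real.Gamma ((j : ℝ) + 1 / 2)) ^ 2 / ((2 * j).factorial : ℝ))
      atTop (𝓝 (Real.pi / Real.sqrt 2)) := by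
  have sum_value : Real.pi / √2 = Real.pi * 2 ^ (-(1 / 2) : ℝ) := by
    rw [Real.rpow_neg zero_le_two, ← Real.sqrt_eq_rpow, div_eq_mul_inv]
  simp only [abel_term_eq_pi_mul_ringChoose, ← Finset.mul_sum, sum_value]
  exact (tendsto_sum_ringChoose (by norm_num)).const_mul Real.pi
end

section
/- Consider the real power series S(z) = ∑_{j=0}^∞ ( Γ(j + 3/2)² / (2j+1)! ) · z^j. Its radius of convergence is 4, and S(z) tends to π/(8√2) as z tends to −4 from the right along the interval (−4, 4); i.e., the (divergent) series ∑_{j=0}^∞ (−4)^j·Γ(j+3/2)²/(2j+1)! is Abel summable with Abel sum π/(8√2). -/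
open Filter Topology

/-!
Legendre's duplication formula cancels one factor `Γ(j + 3/2)` against `(2j + 1)!` and leaves
`Γ(j + 3/2)² / (2j + 1)! = (π / 4) · multichoose (3/2) j / 4ʲ`. Hence
`S(z) = (π / 4) (1 - z / 4) ^ (-3/2)` is a binomial series in `-z / 4`. Its closed form is
continuous at `z = -4`, so the Abel sum there is the value `(π / 4) · 2 ^ (-3/2)`.
-/

theorem hasSum_choose_mul_pow (a : ℝ) {x : ℝ} (hx : |x| < 1) :
    HasSum (fun n : ℕ => Ring.choose a n * x ^ n) ((1 + x) ^ a) := by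
  have hmem : x ∈ Metric.eball (0 : ℝ) 1 := by
    rwa [← ENNReal.ofReal_one, Metric.eball_ofReal, mem_ball_zero_iff, Real.norm_eq_abs]
  simpa [binomialSeries, FormalMultilinearSeries.ofScalars_apply_eq, mul_comm] using
    (Real.one_add_rpow_hasFPowerSeriesOnBall_zero (a := a)).hasSum hmem

theorem not_summable_choose_mul_pow {𝕜 : Type*} [RCLike 𝕜] {a x : 𝕜} (ha : ∀ k : ℕ, a ≠ k)
    (hx : 1 < ‖x‖) : ¬ Summable (fun n : ℕ => Ring.choose a n * x ^ n) := by
  have hradius : (binomialSeries 𝕜 a).radius < ‖x‖₊ := by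
    rw [binomialSeries_radius_eq_one ha]
    exact_mod_cast hx
  rw [← summable_norm_iff]
  simpa [binomialSeries, FormalMultilinearSeries.ofScalars_norm] using
    (binomialSeries 𝕜 a).not_summable_norm_of_radius_lt_nnnorm hradius

theorem choose_neg_mul_neg_pow {R : Type*} [CommRing R] [BinomialRing R] (a x : R) (n : ℕ) :
    Ring.choose (-a) n * (-x) ^ n = Ring.multichoose a n * x ^ n := by
  have hsign : (-1 : R) ^ n * (-1) ^ n = 1 := by rw [← mul_pow, neg_one_mul, neg_neg, one_pow]
  have hchoose : Ring.choose (-a) n = (-1) ^ n * Ring.multichoose a n := by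
    simp [Ring.choose_neg', Units.smul_def]
  rw [hchoose, neg_pow x]
  linear_combination Ring.multichoose a n * x ^ n * hsign

theorem factorial_mul_multichoose {R : Type*} [CommRing R] [BinomialRing R] (a : R) (n : ℕ) :
    (n.factorial : R) * Ring.multichoose a n = (ascPochhammer R n).eval a := by
  rw [← nsmul_eq_mul, Ring.factorial_nsmul_multichoose_eq_ascPochhammer,
    Polynomial.ascPochhammer_smeval_eq_eval]

theorem Gamma_add_natCast {a : ℝ} (ha : ∀ k : ℕ, a ≠ -k) (n : ℕ) :
    Real.Gamma (a + n) = (ascPochhammer ℝ n).eval a * Real.Gamma a := by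
  induction n with
  | zero => simp
  | succ n ih =>
    have hne : a + n ≠ 0 := fun h => ha n (eq_neg_of_add_eq_zero_left h)
    rw [Nat.cast_succ, ← add_assoc, Real.Gamma_add_one hne, ih, ascPochhammer_succ_eval]
    ring

theorem factorial_two_mul_add_one_mul_sqrt_pi (n : ℕ) :
    ((2 * n + 1).factorial : ℝ) * √Real.pi =
      2 ^ (2 * n + 1) * n.factorial * Real.Gamma (n + 3 / 2) := by
  have hdouble := Real.Gamma_mul_Gamma_add_half (n + 1)
  have hpow : (2 : ℝ) ^ (1 - 2 * ((n : ℝ) + 1)) = (2 ^ (2 * n + 1))⁻¹ := by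
    rw [← Real.rpow_natCast, ← Real.rpow_neg zero_le_two]
    push_cast
    ring_nf
  have hfact : Real.Gamma (2 * ((n : ℝ) + 1)) = (2 * n + 1).factorial := by
    rw [← Real.Gamma_nat_eq_factorial]
    push_cast
    ring_nf
  rw [Real.Gamma_nat_eq_factorial, hpow, hfact, show (n : ℝ) + 1 + 1 / 2 = n + 3 / 2 by ring]
    at hdouble
  field_simp at hdouble ⊢
  linear_combination -hdouble

theorem Gamma_three_halves : Real.Gamma (3 / 2) = √Real.pi / 2 := by
  rw [show (3 / 2 : ℝ) = 1 / 2 + 1 by norm_num, Real.Gamma_add_one (by norm_num),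
    Real.Gamma_one_half_eq]
  ring

theorem Gamma_sq_div_factorial_eq_multichoose (n : ℕ) :
    Real.Gamma (n + 3 / 2) ^ 2 / ((2 * n + 1).factorial : ℝ) =
      Real.pi / 4 * (Ring.multichoose (3 / 2 : ℝ) n / 4 ^ n) := by
  have hGamma : Real.Gamma (n + 3 / 2) =
      n.factorial * Ring.multichoose (3 / 2 : ℝ) n * (√Real.pi / 2) := by
    rw [add_comm, Gamma_add_natCast (fun k => by linarith [k.cast_nonneg (α := ℝ)]),
      Gamma_three_halves, factorial_mul_multichoose]
  have hfact := factorial_two_mul_add_one_mul_sqrt_pi n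
  have hpow : (2 : ℝ) ^ (2 * n + 1) = 2 * 4 ^ n := by
    rw [pow_succ', pow_mul]
    norm_num
  have hpi : √Real.pi * √Real.pi = Real.pi := Real.mul_self_sqrt Real.pi_pos.le
  rw [hpow] at hfact
  rw [← mul_div_assoc, div_eq_div_iff (by positivity) (by positivity)]
  calc Real.Gamma (n + 3 / 2) ^ 2 * 4 ^ n
      = √Real.pi / 4 * Ring.multichoose (3 / 2 : ℝ) n *
          (2 * 4 ^ n * n.factorial * Real.Gamma (n + 3 / 2)) := by
        rw [sq]
        nth_rw 1 [hGamma]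
        ring
    _ = Real.pi / 4 * Ring.multichoose (3 / 2 : ℝ) n * (2 * n + 1).factorial := by
        rw [← hfact]
        linear_combination Ring.multichoose (3 / 2 : ℝ) n / 4 * (2 * n + 1).factorial * hpi

theorem Gamma_sq_div_factorial_mul_pow_eq_choose (z : ℝ) (n : ℕ) :
    Real.Gamma (n + 3 / 2) ^ 2 / ((2 * n + 1).factorial : ℝ) * z ^ n =
      Real.pi / 4 * (Ring.choose (-(3 / 2) : ℝ) n * (-(z / 4)) ^ n) := by
  rw [Gamma_sq_div_factorial_eq_multichoose, choose_neg_mul_neg_pow, div_pow]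
  ring

theorem hasSum_Gamma_sq_div_factorial_mul_pow {z : ℝ} (hz : |z| < 4) :
    HasSum (fun n : ℕ => Real.Gamma (n + 3 / 2) ^ 2 / ((2 * n + 1).factorial : ℝ) * z ^ n)
      (Real.pi / 4 * (1 - z / 4) ^ (-(3 / 2) : ℝ)) := by
  have hlt : |(-(z / 4))| < 1 := by
    rw [abs_neg, abs_div, abs_of_pos (four_pos : (0 : ℝ) < 4)]
    linarith
  simpa only [Gamma_sq_div_factorial_mul_pow_eq_choose, sub_eq_add_neg] using
    (hasSum_choose_mul_pow (-(3 / 2)) hlt).mul_left (Real.pi / 4)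

theorem not_summable_Gamma_sq_div_factorial_mul_pow {z : ℝ} (hz : 4 < |z|) :
    ¬ Summable (fun n : ℕ =>
      Real.Gamma (n + 3 / 2) ^ 2 / ((2 * n + 1).factorial : ℝ) * z ^ n) := by
  have hgt : 1 < ‖-(z / 4)‖ := by
    rw [norm_neg, norm_div, Real.norm_eq_abs, Real.norm_ofNat]
    linarith
  simp only [Gamma_sq_div_factorial_mul_pow_eq_choose]
  rw [summable_mul_left_iff (by positivity)]
  exact not_summable_choose_mul_pow (fun k => by linarith [k.cast_nonneg (α := ℝ)]) hgt

theorem rpow_neg_three_halves {x : ℝ} (hx : 0 < x) : x ^ (-(3 / 2) : ℝ) = 1 / (x * √x) := by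
  rw [Real.rpow_neg hx.le, show (3 / 2 : ℝ) = 1 + 1 / 2 by norm_num, Real.rpow_add hx,
    Real.rpow_one, ← Real.sqrt_eq_rpow, one_div]

/-- the power series `S(z) = ∑ⱼ (Γ(j+3/2)²/(2j+1)!) zʲ` has radius of
convergence `4` (it converges for `|z| < 4` and diverges for `|z| > 4`), and
`S(z) → π/(8√2)` as `z → -4⁺` along `(-4, 4)`: the series at `z = -4` is Abel
summable with Abel sum `π/(8√2)`. -/
theorem abel_summability_b00 :
    (∀ z : ℝ, |z| < 4 → Summable (fun j : ℕ =>
        (Real.Gamma ((j : ℝ) + 3 / 2)) ^ 2 / ((2 * j + 1).factorial : ℝ) * z ^ j)) ∧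
    (∀ z : ℝ, 4 < |z| → ¬ Summable (fun j : ℕ =>
        (Real.Gamma ((j : ℝ) + 3 / 2)) ^ 2 / ((2 * j + 1).factorial : ℝ) * z ^ j)) ∧
    Tendsto (fun z : ℝ => ∑' j : ℕ,
        (Real.Gamma ((j : ℝ) + 3 / 2)) ^ 2 / ((2 * j + 1).factorial : ℝ) * z ^ j)
      (nhdsWithin (-4) (Set.Ioo (-4) 4))
      (𝓝 (Real.pi / (8 * Real.sqrt 2))) := by
  refine ⟨fun z hz => (hasSum_Gamma_sq_div_factorial_mul_pow hz).summable,
    fun z hz => not_summable_Gamma_sq_div_factorial_mul_pow hz, ?_⟩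
  have hvalue : Real.pi / 4 * (1 - (-4 : ℝ) / 4) ^ (-(3 / 2) : ℝ) = Real.pi / (8 * √2) := by
    rw [show (1 - (-4 : ℝ) / 4) = 2 by norm_num, rpow_neg_three_halves two_pos]
    ring
  have hcont : ContinuousAt (fun z : ℝ => Real.pi / 4 * (1 - z / 4) ^ (-(3 / 2) : ℝ)) (-4) :=
    continuousAt_const.mul (ContinuousAt.rpow_const (by fun_prop) (Or.inl (by norm_num)))
  rw [← hvalue]
  refine (hcont.tendsto.mono_left nhdsWithin_le_nhds).congr' ?_
  filter_upwards [self_mem_nhdsWithin] with z hz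
  exact (hasSum_Gamma_sq_div_factorial_mul_pow (abs_lt.mpr hz)).tsum_eq.symm
end
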